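/- For every s ∈ H₀(ℂ), the truncated integrals over balls converge to the p-adic open string N-point zeta function: lim_{r→∞} ∫_{B_r^{N−3}∖Λ} ∏_{i=2}^{N−2} |x_i|_p^{s_{1i}} |1−x_i|_p^{s_{(N−1)i}} ∏_{2≤i<j≤N−2} |x_i−x_j|_p^{s_{ij}} ∏ dx_i = Z^{(N)}(s), where B_r^{N−3} = { x ∈ ℚ_p^{N−3} : max_i |x_i|_p ≤ p^r }. -/

import Mathlib

open MeasureTheory Finset

noncomputable section

instance padicMS (p : ℕ) [Fact p.Prime] : MeasurableSpace ℚ_[p] := borel _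
instance padicBS (p : ℕ) [Fact p.Prime] : BorelSpace ℚ_[p] := ⟨rfl⟩

/-- The closed unit ball of `ℚ_[p]` (i.e. `ℤ_[p]`) as a positive compact subset. -/
def padicBall (p : ℕ) [Fact p.Prime] : TopologicalSpace.PositiveCompacts ℚ_[p] where
  carrier := Metric.closedBall 0 1
  isCompact' := isCompact_closedBall 0 1
  interior_nonempty' := ⟨0, Metric.ball_subset_interior_closedBall (Metric.mem_ball_self one_pos)⟩

/-- The Haar measure on `(ℚ_[p], +)`, normalized so that `ℤ_[p]` has measure `1`. -/
def padicHaar (p : ℕ) [Fact p.Prime] : Measure ℚ_[p] :=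
  Measure.addHaarMeasure (padicBall p)

instance padicHaarSF (p : ℕ) [Fact p.Prime] : SigmaFinite (padicHaar p) := by
  unfold padicHaar; infer_instance

/-- The product of normalized Haar measures on a finite power of `ℚ_[p]`. -/
def padicPi (p : ℕ) [Fact p.Prime] (ι : Type) [Fintype ι] : Measure (ι → ℚ_[p]) :=
  Measure.pi fun _ => padicHaar p

/-- `T = {2, …, N-2}`. -/
def Tset (N : ℕ) : Finset ℕ := Finset.Icc 2 (N - 2)

/-- The ordered pairs `(i, j)` with `i < j` and `i, j ∈ A`. -/
def pairsIn (A : Finset ℕ) : Finset (ℕ × ℕ) := (A ×ˢ A).filter fun q => q.1 < q.2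

/-- The coordinates of a point of `ℚ_p^A`, as a function on `ℕ` (junk value `0` off `A`). -/
def padicCoord {p : ℕ} [Fact p.Prime] {A : Finset ℕ} (x : A → ℚ_[p]) (n : ℕ) : ℚ_[p] :=
  if h : n ∈ A then x ⟨n, h⟩ else 0

/-- The complement of the divisor `Λ` in `ℚ_p^{N-3}` (the domain of the Koba–Nielsen
integrand). -/
def ZNset (p N : ℕ) [Fact p.Prime] : Set (↥(Tset N) → ℚ_[p]) :=
  {x | (∀ i, x i ≠ 0 ∧ x i ≠ 1) ∧
    ∀ q ∈ pairsIn (Tset N), padicCoord x q.1 ≠ padicCoord x q.2}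

/-- The Koba–Nielsen integrand
`∏ |x_i|^{s_{1i}} |1-x_i|^{s_{(N-1)i}} ∏ |x_i-x_j|^{s_{ij}}`. -/
def ZNintegrand (p N : ℕ) [Fact p.Prime] (s : ℕ → ℕ → ℂ) (x : ↥(Tset N) → ℚ_[p]) : ℂ :=
  (∏ i ∈ Tset N,
    (‖padicCoord x i‖ : ℂ) ^ s 1 i * (‖1 - padicCoord x i‖ : ℂ) ^ s (N - 1) i) *
  ∏ q ∈ pairsIn (Tset N), (‖padicCoord x q.1 - padicCoord x q.2‖ : ℂ) ^ s q.1 q.2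

/-- The conditions `C1'`–`C4'` defining `H₀(ℂ)`. -/
def H0C (N : ℕ) (s : ℕ → ℕ → ℂ) : Prop :=
  (∀ J ⊆ Tset N, J.Nonempty →
    (J.card : ℝ) + (∑ i ∈ J, ((s 1 i).re + (s (N - 1) i).re)) +
      (∑ q ∈ (pairsIn (Tset N)).filter (fun q => q.1 ∈ J), (s q.1 q.2).re) +
      (∑ q ∈ (pairsIn (Tset N)).filter (fun q => q.1 ∉ J ∧ q.2 ∈ J), (s q.1 q.2).re) < 0) ∧
  (∀ J ⊆ Tset N, 2 ≤ J.card →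
    (0 : ℝ) < (J.card : ℝ) - 1 + ∑ q ∈ pairsIn J, (s q.1 q.2).re) ∧
  (∀ t ∈ ({1, N - 1} : Finset ℕ), ∀ J ⊆ Tset N, ∀ S ⊆ J, (2 ≤ J.card ∨ 1 ≤ S.card) →
    (0 : ℝ) < (J.card : ℝ) + (∑ i ∈ S, (s t i).re) + ∑ q ∈ pairsIn J, (s q.1 q.2).re) ∧
  ((∀ i ∈ Tset N, -1 < (s 1 i).re ∧ -1 < (s (N - 1) i).re) ∧
    ∀ q ∈ pairsIn (Tset N), -1 < (s q.1 q.2).re)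

/-!
The integral converges absolutely, so that the limit is an instance of dominated convergence.

A homothety of ratio `b` multiplies the measure `∏ ‖x i‖ ^ e i * ∏_{i < j} ‖x i - x j‖ ^ a i j` on
`F ^ J` by `‖b‖ ^ (-degree)`. If the degree is positive, the mass of the unit polydisc is therefore
bounded by a geometric series whose first term is the mass of the shell of configurations having a
point on the unit sphere; if it is negative, the same holds at infinity. By the ultrametric
inequality, the distance between a point on the sphere and a point off it is the larger of their
norms, so on the shell the measure splits into a factor on a power of the sphere and a factor with
fewer points and shifted exponents, and one concludes by induction. On a power of the sphere there
is no one-point singularity left, and one moves one of the points to the origin by a translation,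
which again lowers the number of points.

The factors `‖x i‖` and `‖1 - x i‖` of the Koba–Nielsen integrand are accommodated by splitting `F`
into the open unit ball, where `‖1 - z‖ = 1`, the unit sphere, where `‖z‖ = 1`, and the rest, where
`‖1 - z‖ = ‖z‖`.
-/

open Function Metric
open scoped ENNReal NNReal Pointwise

section Pairs

theorem mem_of_mem_pairsIn {A : Finset ℕ} {q : ℕ × ℕ} (hq : q ∈ pairsIn A) :
    q.1 ∈ A ∧ q.2 ∈ A :=
  Finset.mem_product.1 (Finset.mem_filter.1 hq).1

variable {M : Type*} [CommMonoid M]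

@[to_additive]
theorem prod_pairsIn (g : ℕ → ℕ → M) (A : Finset ℕ) :
    ∏ q ∈ pairsIn A, g q.1 q.2 = ∏ i ∈ A, ∏ j ∈ A, if i < j then g i j else 1 := by
  rw [pairsIn, prod_filter, prod_product]

@[to_additive]
theorem prod_pairsIn_union {g : ℕ → ℕ → M} (hg : ∀ i j, g i j = g j i) {K L : Finset ℕ}
    (hKL : Disjoint K L) :
    ∏ q ∈ pairsIn (K ∪ L), g q.1 q.2 =
      (∏ q ∈ pairsIn K, g q.1 q.2) * (∏ q ∈ pairsIn L, g q.1 q.2) *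
        ∏ i ∈ L, ∏ j ∈ K, g i j := by
  have cross : (∏ i ∈ K, ∏ j ∈ L, if i < j then g i j else 1) *
      (∏ i ∈ L, ∏ j ∈ K, if i < j then g i j else 1) = ∏ i ∈ L, ∏ j ∈ K, g i j := by
    rw [prod_comm, ← prod_mul_distrib]
    refine prod_congr rfl fun i hi => ?_
    rw [← prod_mul_distrib]
    refine prod_congr rfl fun j hj => ?_
    rcases lt_or_gt_of_ne (Finset.disjoint_left.1 hKL hj <| · ▸ hi : j ≠ i) with h | h
    · simp [h, h.not_gt, hg i j]
    · simp [h, h.not_gt]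
  simp only [prod_pairsIn, prod_union hKL, prod_mul_distrib, ← cross]
  ac_rfl

@[to_additive]
theorem prod_pairsIn_insert {g : ℕ → ℕ → M} (hg : ∀ i j, g i j = g j i) {m : ℕ} {J : Finset ℕ}
    (hm : m ∉ J) :
    ∏ q ∈ pairsIn (insert m J), g q.1 q.2 = (∏ i ∈ J, g m i) * ∏ q ∈ pairsIn J, g q.1 q.2 := by
  have hsingleton : pairsIn {m} = ∅ := by ext; simp [pairsIn]; grind
  rw [insert_eq, union_comm, prod_pairsIn_union hg (disjoint_singleton_right.2 hm), hsingleton,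
    prod_empty, mul_one, prod_singleton, mul_comm]

@[to_additive]
theorem prod_pairsIn_filter_touching {g : ℕ → ℕ → M} (hg : ∀ i j, g i j = g j i)
    {J A : Finset ℕ} (hJ : J ⊆ A) :
    (∏ q ∈ (pairsIn A).filter (fun q => q.1 ∈ J), g q.1 q.2) *
        (∏ q ∈ (pairsIn A).filter (fun q => q.1 ∉ J ∧ q.2 ∈ J), g q.1 q.2) =
      (∏ q ∈ pairsIn J, g q.1 q.2) * ∏ i ∈ J, ∏ j ∈ A \ J, g i j := by
  let g' (i j : ℕ) : M := if i ∈ J ∨ j ∈ J then g i j else 1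
  have hg' (i j) : g' i j = g' j i := by simp only [g', or_comm, hg i j]
  calc _ = ∏ q ∈ pairsIn (A \ J ∪ J), g' q.1 q.2 := by
        rw [sdiff_union_of_subset hJ, prod_filter, prod_filter, ← prod_mul_distrib]
        refine prod_congr rfl fun q _ => ?_
        by_cases h : q.1 ∈ J <;> simp [g', h]
    _ = _ := by
        have out : ∏ q ∈ pairsIn (A \ J), g' q.1 q.2 = 1 := prod_eq_one fun q hq => by
          have := mem_of_mem_pairsIn hq
          grind
        rw [prod_pairsIn_union hg' sdiff_disjoint, out, one_mul]
        refine congr_arg₂ _ (prod_congr rfl fun q hq => if_pos (.inl (mem_of_mem_pairsIn hq).1))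
          (prod_congr rfl fun i hi => prod_congr rfl fun j _ => if_pos (.inl hi))

end Pairs

theorem measure_lt_top_of_map_eq_smul {E : Type*} [MeasurableSpace E] {m : Measure E} {T : E → E}
    (hT : Measurable T) {r : ℝ≥0∞} (hr : r < 1) (hm : m.map T = r • m) {A S : Set E}
    (hS : MeasurableSet S) (hS' : m S < ⊤) (hA : ∀ᵐ x ∂m, x ∈ A → ∃ k, T^[k] x ∈ S) :
    m A < ⊤ := by
  have key (k : ℕ) : m (T^[k] ⁻¹' S) = r ^ k * m S := by
    induction k with
    | zero => simp
    | succ k ih =>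
      rw [iterate_succ, Set.preimage_comp, ← Measure.map_apply hT (hT.iterate k hS), hm,
        Measure.smul_apply, ih, smul_eq_mul, pow_succ', mul_assoc]
  calc m A ≤ m (⋃ k, T^[k] ⁻¹' S) :=
        measure_mono_ae (hA.mono fun x hx hxA => Set.mem_iUnion.2 (hx hxA))
    _ ≤ ∑' k, m (T^[k] ⁻¹' S) := measure_iUnion_le _
    _ = (1 - r)⁻¹ * m S := by simp only [key, ENNReal.tsum_mul_right, ENNReal.tsum_geometric]
    _ < ⊤ := ENNReal.mul_lt_top (ENNReal.inv_lt_top.2 (tsub_pos_of_lt hr)) hS'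

section Marginal

theorem dependsOn_indicator_pi {ι : Type*} {X : ι → Type*} {f : (∀ i, X i) → ℝ≥0∞}
    {J : Finset ι} (hf : DependsOn f J) (U : ∀ i, Set (X i)) :
    DependsOn (((J : Set ι).pi U).indicator f) J := fun x y h => by
  have hmem : x ∈ (J : Set ι).pi U ↔ y ∈ (J : Set ι).pi U :=
    forall₂_congr fun i hi => by rw [h i hi]
  classical exact if_congr hmem (hf h) rfl

variable {ι : Type*} [DecidableEq ι]

section Product

variable {X : ι → Type*} [∀ i, MeasurableSpace (X i)] (μ : ∀ i, Measure (X i)) {J K L : Finset ι}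
  {f g : (∀ i, X i) → ℝ≥0∞}

theorem lmarginal_eq_of_dependsOn (hf : DependsOn f J) (x y : ∀ i, X i) :
    (∫⋯∫⁻_J, f ∂μ) x = (∫⋯∫⁻_J, f ∂μ) y :=
  lintegral_congr fun z => hf fun i hi => by simp [updateFinset, mem_coe.1 hi]

theorem lmarginal_union_mul [∀ i, SigmaFinite (μ i)] (hKL : Disjoint K L) (hf : Measurable f)
    (hg : Measurable g) (hfK : DependsOn f K) (hgL : DependsOn g L) (x : ∀ i, X i) :
    (∫⋯∫⁻_K ∪ L, f * g ∂μ) x = (∫⋯∫⁻_K, f ∂μ) x * (∫⋯∫⁻_L, g ∂μ) x := by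
  have inner (y) : (∫⋯∫⁻_L, f * g ∂μ) y = f y * (∫⋯∫⁻_L, g ∂μ) x := by
    rw [lmarginal_eq_of_dependsOn μ hgL x y]
    refine (lintegral_congr fun z => congr_arg (· * _) (hfK fun i hi => ?_)).trans
      (lintegral_const_mul _ (hg.comp measurable_updateFinset))
    simp [updateFinset, Finset.disjoint_left.1 hKL hi]
  rw [lmarginal_union μ _ (hf.mul hg) hKL, funext inner]
  exact lintegral_mul_const _ (hf.comp measurable_updateFinset)

end Product

theorem lmarginal_comp_sub_left {G : Type*} [AddGroup G] [MeasurableSpace G] [MeasurableAdd G]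
    [MeasurableNeg G] (μ : ι → Measure G) [∀ i, SigmaFinite (μ i)]
    [∀ i, (μ i).IsAddLeftInvariant] [∀ i, (μ i).IsNegInvariant] (J : Finset ι)
    (f : (ι → G) → ℝ≥0∞) (c x : ι → G) :
    (∫⋯∫⁻_J, fun x => f (c - x) ∂μ) x = (∫⋯∫⁻_J, f ∂μ) (c - x) := by
  have (y : J → G) :
      c - updateFinset x J y = updateFinset (c - x) J ((fun i : J => c i) - y) := by
    ext i
    by_cases hi : i ∈ J <;> simp [updateFinset, hi]
  simp only [lmarginal, this]
  exact lintegral_sub_left_eq_self (fun y => f (updateFinset (c - x) J y)) _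

end Marginal

/-- The norm of `F` is the modulus of `F`: multiplication by `c` multiplies Haar measures
by `‖c‖`. For a nonarchimedean local field this is the normalisation `‖ϖ‖ = q⁻¹`, with `q` the
cardinality of the residue field. -/
class NormEqModulus (F : Type*) [NontriviallyNormedField F] [ProperSpace F] : Prop where
  distribHaarChar_eq (c : Fˣ) : distribHaarChar F c = ‖(c : F)‖₊

theorem norm_sub_eq_left_of_norm_lt {E : Type*} [SeminormedAddGroup E] [IsUltrametricDist E]
    {x y : E} (h : ‖y‖ < ‖x‖) : ‖x - y‖ = ‖x‖ := by
  rw [sub_eq_add_neg, IsUltrametricDist.norm_add_eq_max_of_norm_ne_norm (by simpa using h.ne'),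
    norm_neg, max_eq_left h.le]

section LocalField

variable {F : Type*} [NontriviallyNormedField F] [ProperSpace F]

section Scaling

variable [NormEqModulus F] [MeasurableSpace F] [BorelSpace F] (μ : Measure F) [μ.IsAddHaarMeasure]
  {b : F}

theorem map_const_mul_eq_smul (hb : b ≠ 0) : μ.map (b * ·) = ‖b‖ₑ⁻¹ • μ := by
  ext s hs
  have hpre : (b * ·) ⁻¹' s = (Units.mk0 b hb)⁻¹ • s := Set.preimage_smul (Units.mk0 b hb) s
  rw [Measure.map_apply (by fun_prop) hs, hpre, ← distribHaarChar_mul μ,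
    NormEqModulus.distribHaarChar_eq, Measure.smul_apply, smul_eq_mul]
  simp [ENNReal.coe_inv, hb, enorm]

theorem pi_map_const_smul_eq_smul (ι : Type*) [Fintype ι] (hb : b ≠ 0) :
    (Measure.pi fun _ : ι => μ).map (b • ·) =
      ‖b‖ₑ⁻¹ ^ Fintype.card ι • Measure.pi fun _ : ι => μ := by
  have : SigmaFinite (μ.map (b * ·)) := (MeasurableEquiv.mulLeft₀ b hb).sigmaFinite_map
  refine (Measure.pi_map_pi (f := fun _ x => b * x) fun _ => by fun_prop).trans
    (Measure.pi_eq fun s _ => ?_)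
  simp [map_const_mul_eq_smul μ hb, Measure.pi_pi, Finset.prod_mul_distrib]

end Scaling

variable [IsUltrametricDist F]

variable (F) in
theorem exists_norm_eq_zpow :
    ∃ ϖ : F, ϖ ≠ 0 ∧ ‖ϖ‖ < 1 ∧ ∀ z : F, z ≠ 0 → ∃ k : ℤ, ‖z‖ = ‖ϖ‖ ^ k := by
  have hcompact : IsCompact (ball (0 : F) 1) :=
    isCompact_of_isClosed_isBounded (IsUltrametricDist.isClosed_ball 0 1) isBounded_ball
  obtain ⟨ϖ, hϖ, hmax⟩ :=
    hcompact.exists_isMaxOn ⟨0, mem_ball_self one_pos⟩ continuous_norm.continuousOn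
  rw [mem_ball_zero_iff] at hϖ
  obtain ⟨c, hc0, hc1⟩ := NormedField.exists_norm_lt_one F
  have hpos : 0 < ‖ϖ‖ := hc0.trans_le (hmax (mem_ball_zero_iff.2 hc1))
  refine ⟨ϖ, norm_pos_iff.1 hpos, hϖ, fun z hz => ?_⟩
  obtain ⟨n, hn, hn'⟩ := exists_mem_Ico_zpow (norm_pos_iff.2 hz) ((one_lt_inv₀ hpos).2 hϖ)
  have hlt : ‖z * ϖ ^ (n + 1)‖ < 1 := by
    rwa [norm_mul, norm_zpow, ← lt_div_iff₀ (by positivity), one_div, ← inv_zpow]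
  have hle : ‖z‖ * ‖ϖ‖ ^ (n + 1) ≤ ‖ϖ‖ := by
    simpa using hmax (mem_ball_zero_iff.2 hlt)
  refine ⟨-n, le_antisymm ?_ (by simpa using hn)⟩
  rwa [zpow_add_one₀ hpos.ne', ← mul_assoc, mul_le_iff_le_one_left hpos,
    ← le_div_iff₀ (by positivity), one_div, ← zpow_neg] at hle

end LocalField

section Uniformizer

variable {F : Type*} [NontriviallyNormedField F] [ProperSpace F]

theorem distribHaarChar_eq_one_of_norm_eq_one {c : Fˣ} (hc : ‖(c : F)‖ = 1) :
    distribHaarChar F c = 1 := by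
  borelize F
  have hB : c • closedBall (0 : F) 1 = closedBall 0 1 :=
    (smul_closedBall' c.ne_zero 0 1).trans (by simp [hc])
  exact distribHaarChar_eq_of_measure_smul_eq_mul (μ := Measure.addHaar)
    (measure_closedBall_pos _ 0 one_pos).ne' (isCompact_closedBall 0 1).measure_ne_top
    (by rw [hB, ENNReal.coe_one, one_mul])

theorem normEqModulus_of_distribHaarChar_eq {ϖ : Fˣ}
    (hpow : ∀ z : F, z ≠ 0 → ∃ k : ℤ, ‖z‖ = ‖(ϖ : F)‖ ^ k)
    (hϖ : distribHaarChar F ϖ = ‖(ϖ : F)‖₊) : NormEqModulus F where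
  distribHaarChar_eq c := by
    obtain ⟨k, hk⟩ := hpow c c.ne_zero
    have hunit : ‖((c / ϖ ^ k : Fˣ) : F)‖ = 1 := by
      simpa [hk] using zpow_ne_zero k (norm_ne_zero_iff.2 ϖ.ne_zero)
    rw [← div_mul_cancel c (ϖ ^ k), map_mul, map_zpow, distribHaarChar_eq_one_of_norm_eq_one hunit,
      one_mul, hϖ, div_mul_cancel]
    exact NNReal.eq (by simp [hk])

end Uniformizer

section Padic

variable {p : ℕ} [Fact p.Prime]

instance isAddHaarMeasure_padicHaar : (padicHaar p).IsAddHaarMeasure := by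
  unfold padicHaar
  infer_instance

theorem padic_closedBall_eq_iUnion_ball :
    closedBall (0 : ℚ_[p]) 1 = ⋃ n ∈ range p, ball (n : ℚ_[p]) 1 := by
  ext z
  simp only [Set.mem_iUnion, mem_range, exists_prop, mem_ball_iff_norm, mem_closedBall_zero_iff]
  constructor
  · intro hz
    obtain ⟨n, hn, h⟩ := PadicInt.exists_mem_range (⟨z, hz⟩ : ℤ_[p])
    exact ⟨n, hn, PadicInt.mem_nonunits.1 h⟩
  · rintro ⟨n, -, h⟩
    calc ‖z‖ = ‖z - n + n‖ := by rw [sub_add_cancel]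
      _ ≤ max ‖z - n‖ ‖(n : ℚ_[p])‖ := Padic.nonarchimedean _ _
      _ ≤ 1 := max_le h.le (mod_cast Padic.norm_int_le_one (p := p) n)

theorem padic_pairwiseDisjoint_ball :
    (range p : Set ℕ).PairwiseDisjoint fun n => ball (n : ℚ_[p]) 1 := by
  intro m hm n hn hmn
  refine (IsUltrametricDist.ball_eq_or_disjoint _ _ 1).resolve_left fun h => hmn ?_
  have hlt : ‖((m - n : ℤ) : ℚ_[p])‖ < 1 := by
    have : (m : ℚ_[p]) ∈ ball (n : ℚ_[p]) 1 := h ▸ mem_ball_self one_pos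
    simpa [dist_eq_norm] using this
  have hmod : m ≡ n [MOD p] :=
    ((Nat.modEq_iff_dvd (a := n)).2 (Padic.norm_intCast_lt_one_iff.1 hlt)).symm
  exact hmod.eq_of_lt_of_lt (by simpa using hm) (by simpa using hn)

theorem padicHaar_ball : padicHaar p (ball 0 1) = (p : ℝ≥0∞)⁻¹ := by
  have hsum := measure_biUnion_finset (μ := padicHaar p) padic_pairwiseDisjoint_ball
    fun n _ => isOpen_ball.measurableSet
  have hball (n : ℕ) : padicHaar p (ball (n : ℚ_[p]) 1) = padicHaar p (ball 0 1) :=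
    Measure.addHaar_ball_center ..
  have hone : padicHaar p (closedBall 0 1) = 1 := Measure.addHaarMeasure_self (K₀ := padicBall p)
  rw [← padic_closedBall_eq_iUnion_ball, hone] at hsum
  exact ENNReal.eq_inv_of_mul_eq_one_left (by simpa [hball, mul_comm] using hsum.symm)

theorem distribHaarChar_padic_p {ϖ : ℚ_[p]ˣ} (hϖ : (ϖ : ℚ_[p]) = p) :
    distribHaarChar ℚ_[p] ϖ = ‖(ϖ : ℚ_[p])‖₊ := by
  have hB : ϖ • closedBall (0 : ℚ_[p]) 1 = ball 0 1 := by
    refine (smul_closedBall' ϖ.ne_zero 0 1).trans (Set.ext fun z => ?_)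
    simpa [hϖ] using Padic.norm_le_pow_iff_norm_lt_pow_add_one z (-1)
  have hone : padicHaar p (closedBall 0 1) = 1 := Measure.addHaarMeasure_self (K₀ := padicBall p)
  refine distribHaarChar_eq_of_measure_smul_eq_mul (μ := padicHaar p) (s := closedBall 0 1)
    (by simp [hone]) (by simp [hone]) ?_
  have hp : 0 < p := (Fact.out : p.Prime).pos
  rw [hB, padicHaar_ball, hone, mul_one]
  change _ = ‖(ϖ : ℚ_[p])‖ₑ
  rw [hϖ, ← ofReal_norm, Padic.norm_p, ENNReal.ofReal_inv_of_pos (mod_cast hp),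
    ENNReal.ofReal_natCast]

instance normEqModulus_padic : NormEqModulus ℚ_[p] := by
  have hp : (p : ℚ_[p]) ≠ 0 := mod_cast (Fact.out : p.Prime).ne_zero
  refine normEqModulus_of_distribHaarChar_eq (ϖ := .mk0 p hp) (fun z hz => ⟨z.valuation, ?_⟩)
    (distribHaarChar_padic_p rfl)
  rw [Units.val_mk0, Padic.norm_p, inv_zpow', Padic.norm_eq_zpow_neg_valuation hz]

end Padic

section Rpow

variable {x : ℝ≥0∞}

theorem prod_rpow_eq_rpow_sum {ι : Type*} (hx0 : x ≠ 0) (hx : x ≠ ⊤) (t : Finset ι) (f : ι → ℝ) :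
    ∏ i ∈ t, x ^ f i = x ^ ∑ i ∈ t, f i := by
  induction t using Finset.cons_induction with
  | empty => simp
  | cons i t hi ih => rw [prod_cons, sum_cons, ih, ENNReal.rpow_add _ _ hx0 hx]

theorem rpow_mul_rpow_le (x : ℝ≥0∞) (r s : ℝ) : x ^ r * x ^ s ≤ x ^ (r + s) := by
  obtain rfl | hx0 := eq_or_ne x 0
  · rcases lt_trichotomy r 0 with hr | rfl | hr <;> rcases lt_trichotomy s 0 with hs | rfl | hs <;>
      simp [*, add_neg]
  obtain rfl | hx := eq_or_ne x ⊤
  · rcases lt_trichotomy r 0 with hr | rfl | hr <;> rcases lt_trichotomy s 0 with hs | rfl | hs <;>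
      simp [*, add_pos]
  exact (ENNReal.rpow_add r s hx0 hx).ge

end Rpow

section Configuration

variable {F : Type*} [NontriviallyNormedField F]

/-- The weight `∏ φ i (x i) * ∏_{i < j} ‖x i - x j‖ ^ a i j` of a configuration of points `x i`,
`i ∈ J`. With values in `ℝ≥0∞` a negative power of `0` is `⊤`, so the weight is infinite where
the integrand of Koba–Nielsen type is singular. -/
def configWeight (φ : ℕ → F → ℝ≥0∞) (a : ℕ → ℕ → ℝ) (J : Finset ℕ) (x : ℕ → F) : ℝ≥0∞ :=
  (∏ i ∈ J, φ i (x i)) * ∏ q ∈ pairsIn J, ‖x q.1 - x q.2‖ₑ ^ a q.1 q.2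

theorem dependsOn_configWeight (φ : ℕ → F → ℝ≥0∞) (a : ℕ → ℕ → ℝ) (J : Finset ℕ) :
    DependsOn (configWeight φ a J) J := fun x y h => by
  refine congr_arg₂ (· * ·) (prod_congr rfl fun i hi => by rw [h i hi])
    (prod_congr rfl fun q hq => ?_)
  rw [h _ (mem_of_mem_pairsIn hq).1, h _ (mem_of_mem_pairsIn hq).2]

/-- The twist of the one-point weights `φ i` by `‖z‖ ^ e i`. It accounts for points at relative
distance a power of `‖z‖` from `z`. -/
def twist (e : ℕ → ℝ) (φ : ℕ → F → ℝ≥0∞) (i : ℕ) (z : F) : ℝ≥0∞ :=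
  φ i z * ‖z‖ₑ ^ e i

/-- Every point `z` of `V` is at distance exactly `‖z‖ ^ σ` from every point of `U`. -/
def NormSeparated (σ : ℝ) (U V : Set F) : Prop :=
  ∀ z ∈ V, ∀ w ∈ U, z ≠ w ∧ ‖z - w‖ₑ = ‖z‖ₑ ^ σ

theorem prod_enorm_sub_rpow_of_normSeparated {σ : ℝ} {U V : Set F} (h : NormSeparated σ U V)
    {K : Finset ℕ} {x : ℕ → F} (hx : ∀ j ∈ K, x j ∈ U) {z : F} (hz : z ∈ V) (e : ℕ → ℝ) :
    ∏ j ∈ K, ‖z - x j‖ₑ ^ e j = ‖z‖ₑ ^ (σ * ∑ j ∈ K, e j) := by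
  obtain rfl | ⟨k, hk⟩ := K.eq_empty_or_nonempty
  · simp
  obtain ⟨hne, hzk⟩ := h z hz _ (hx k hk)
  have h0 : ‖z‖ₑ ^ σ ≠ 0 := by simpa [← hzk, sub_eq_zero] using hne
  rw [ENNReal.rpow_mul, ← prod_rpow_eq_rpow_sum h0 (hzk ▸ enorm_ne_top)]
  exact prod_congr rfl fun j hj => by rw [(h z hz _ (hx j hj)).2]

theorem configWeight_union {a : ℕ → ℕ → ℝ} (ha : ∀ i j, a i j = a j i) {σ : ℝ} {U V : Set F}
    (h : NormSeparated σ U V) {K L : Finset ℕ} (hKL : Disjoint K L) {x : ℕ → F}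
    (hU : ∀ i ∈ K, x i ∈ U) (hV : ∀ i ∈ L, x i ∈ V) (φ : ℕ → F → ℝ≥0∞) :
    configWeight φ a (K ∪ L) x =
      configWeight φ a K x * configWeight (twist (fun i => σ * ∑ j ∈ K, a i j) φ) a L x := by
  have hsymm (i j) : ‖x i - x j‖ₑ ^ a i j = ‖x j - x i‖ₑ ^ a j i := by
    rw [ha, enorm_sub_rev]
  have cross : ∏ i ∈ L, ∏ j ∈ K, ‖x i - x j‖ₑ ^ a i j =
      ∏ i ∈ L, ‖x i‖ₑ ^ (σ * ∑ j ∈ K, a i j) :=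
    prod_congr rfl fun i hi => prod_enorm_sub_rpow_of_normSeparated h hU (hV i hi) (a i)
  simp only [configWeight, twist, prod_union hKL, prod_mul_distrib, ← cross,
    prod_pairsIn_union hsymm hKL]
  ac_rfl

theorem configWeight_insert {a : ℕ → ℕ → ℝ} (ha : ∀ i j, a i j = a j i) {m : ℕ} {J : Finset ℕ}
    (hm : m ∉ J) (φ : ℕ → F → ℝ≥0∞) (x : ℕ → F) :
    configWeight φ a (insert m J) x =
      φ m (x m) * configWeight (fun i z => φ i z * ‖x m - z‖ₑ ^ a m i) a J x := by
  have hsymm (i j) : ‖x i - x j‖ₑ ^ a i j = ‖x j - x i‖ₑ ^ a j i := by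
    rw [ha, enorm_sub_rev]
  simp only [configWeight, prod_pairsIn_insert hsymm hm, prod_insert hm, prod_mul_distrib,
    mul_assoc]

theorem configWeight_le_of_le {φ ψ : ℕ → F → ℝ≥0∞} {J : Finset ℕ} {x : ℕ → F}
    (h : ∀ i ∈ J, φ i (x i) ≤ ψ i (x i)) (a : ℕ → ℕ → ℝ) :
    configWeight φ a J x ≤ configWeight ψ a J x :=
  mul_le_mul_left (prod_le_prod' h) _

theorem indicator_configWeight_pi_ite {a : ℕ → ℕ → ℝ} (ha : ∀ i j, a i j = a j i) {σ : ℝ}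
    {U V : Set F} (h : NormSeparated σ U V) {J K : Finset ℕ} (hK : K ⊆ J) (φ : ℕ → F → ℝ≥0∞) :
    ((J : Set ℕ).pi fun i => if i ∈ K then U else V).indicator (configWeight φ a J) =
      ((K : Set ℕ).pi fun _ => U).indicator (configWeight φ a K) *
        (((J \ K : Finset ℕ) : Set ℕ).pi fun _ => V).indicator
          (configWeight (twist (fun i => σ * ∑ j ∈ K, a i j) φ) a (J \ K)) := by
  ext x
  have hmem : (x ∈ (J : Set ℕ).pi fun i => if i ∈ K then U else V) ↔
      (x ∈ (K : Set ℕ).pi fun _ => U) ∧ x ∈ ((J \ K : Finset ℕ) : Set ℕ).pi fun _ => V := by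
    simp only [Set.mem_pi, mem_coe, mem_sdiff]
    grind
  by_cases hxU : x ∈ (K : Set ℕ).pi fun _ => U
  · by_cases hxV : x ∈ ((J \ K : Finset ℕ) : Set ℕ).pi fun _ => V
    · simpa [-coe_sdiff, hmem, hxU, hxV, union_sdiff_of_subset hK] using
        configWeight_union ha h disjoint_sdiff hxU hxV φ
    · simp [-coe_sdiff, hmem, hxV]
  · simp [-coe_sdiff, hmem, hxU]

variable [MeasurableSpace F]

/-- The cube `U ^ J` in `F ^ J`. -/
abbrev cube (J : Finset ℕ) (U : Set F) : Set (J → F) :=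
  Set.univ.pi fun _ => U

/-- The measure on `F ^ J` with density `configWeight φ a J` with respect to `μ ^ J`. -/
def configMeasure (μ : Measure F) (φ : ℕ → F → ℝ≥0∞) (a : ℕ → ℕ → ℝ) (J : Finset ℕ) :
    Measure (J → F) :=
  (Measure.pi fun _ => μ).withDensity fun y => configWeight φ a J (updateFinset 0 J y)

variable (μ : Measure F) [SigmaFinite μ] {a : ℕ → ℕ → ℝ} {J : Finset ℕ} {φ : ℕ → F → ℝ≥0∞}

theorem configMeasure_cube_empty (U : Set F) : configMeasure μ φ a ∅ (cube ∅ U) = 1 := by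
  simp [configMeasure, configWeight, pairsIn]

theorem configMeasure_cube_mono {ψ : ℕ → F → ℝ≥0∞} {U V : Set F} (hU : MeasurableSet U)
    (hUV : U ⊆ V) (h : ∀ i ∈ J, ∀ z ∈ U, φ i z ≤ ψ i z) :
    configMeasure μ φ a J (cube J U) ≤ configMeasure μ ψ a J (cube J V) := by
  refine le_trans ?_ (measure_mono (Set.pi_mono fun _ _ => hUV))
  rw [configMeasure, configMeasure, withDensity_apply', withDensity_apply']
  refine setLIntegral_mono' (.univ_pi fun _ => hU) fun y hy =>
    configWeight_le_of_le (fun i hi => ?_) a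
  simpa [updateFinset, hi] using h i hi _ (hy ⟨i, hi⟩ trivial)

theorem configMeasure_pi {U : ℕ → Set F} (hU : ∀ i, MeasurableSet (U i)) (x : ℕ → F) :
    configMeasure μ φ a J (Set.univ.pi fun i => U i) =
      (∫⋯∫⁻_J, ((J : Set ℕ).pi U).indicator (configWeight φ a J) ∂fun _ => μ) x := by
  rw [configMeasure, withDensity_apply', ← lintegral_indicator (.univ_pi fun i : J => hU i)]
  refine lintegral_congr fun y => ?_
  have hmem : y ∈ Set.univ.pi (fun i : J => U i) ↔ updateFinset x J y ∈ (J : Set ℕ).pi U := by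
    simp +contextual [Set.mem_pi, updateFinset]
  have hweight := dependsOn_configWeight φ a J (x := updateFinset 0 J y) (y := updateFinset x J y)
    fun i hi => by simp [updateFinset, mem_coe.1 hi]
  classical exact if_congr hmem hweight rfl

variable [BorelSpace F]

theorem configMeasure_sub_left [μ.IsAddLeftInvariant] [μ.IsNegInvariant] {U : Set F}
    (hU : MeasurableSet U) (c : F) :
    configMeasure μ (fun i z => φ i (c - z)) a J (cube J ((c - ·) ⁻¹' U)) =
      configMeasure μ φ a J (cube J U) := by
  have hweight : ((J : Set ℕ).pi fun _ => (c - ·) ⁻¹' U).indicator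
      (configWeight (fun i z => φ i (c - z)) a J) =
        fun x => ((J : Set ℕ).pi fun _ => U).indicator (configWeight φ a J) ((fun _ => c) - x) := by
    ext x
    have hdiff (i j : ℕ) : ‖(c - x i) - (c - x j)‖ₑ = ‖x i - x j‖ₑ := by
      rw [sub_sub_sub_cancel_left, enorm_sub_rev]
    simp only [Set.indicator, configWeight, Pi.sub_apply, hdiff]
    rfl
  rw [configMeasure_pi μ (fun _ => (measurable_const_sub c) hU) 0, hweight,
    configMeasure_pi μ (fun _ => hU) ((fun _ => c) - 0)]
  exact lmarginal_comp_sub_left (fun _ => μ) J _ (fun _ => c) 0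

variable [SecondCountableTopology F]

theorem measurable_configWeight {φ : ℕ → F → ℝ≥0∞} (hφ : ∀ i, Measurable (φ i))
    (a : ℕ → ℕ → ℝ) (J : Finset ℕ) : Measurable (configWeight φ a J) := by
  unfold configWeight
  fun_prop

theorem measurable_twist {φ : ℕ → F → ℝ≥0∞} (hφ : ∀ i, Measurable (φ i)) (e : ℕ → ℝ) (i : ℕ) :
    Measurable (twist e φ i) := by
  unfold twist
  fun_prop

theorem configMeasure_pi_ite (hφ : ∀ i, Measurable (φ i)) (ha : ∀ i j, a i j = a j i) {σ : ℝ}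
    {U V : Set F} (hU : MeasurableSet U) (hV : MeasurableSet V) (hUV : NormSeparated σ U V)
    {K : Finset ℕ} (hK : K ⊆ J) :
    configMeasure μ φ a J (Set.univ.pi fun i => if (i : ℕ) ∈ K then U else V) =
      configMeasure μ φ a K (cube K U) *
        configMeasure μ (twist (fun i => σ * ∑ j ∈ K, a i j) φ) a (J \ K) (cube (J \ K) V) := by
  have hψ := measurable_twist hφ fun i => σ * ∑ j ∈ K, a i j
  have hW (i : ℕ) : MeasurableSet (if i ∈ K then U else V) := by split_ifs <;> assumption
  rw [configMeasure_pi μ hW 0, configMeasure_pi μ (fun _ => hU) 0,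
    configMeasure_pi μ (fun _ => hV) 0, indicator_configWeight_pi_ite ha hUV hK φ]
  have := lmarginal_union_mul (fun _ => μ) (disjoint_sdiff : Disjoint K (J \ K))
    ((measurable_configWeight hφ a K).indicator (.pi K.countable_toSet fun _ _ => hU))
    ((measurable_configWeight hψ a _).indicator (.pi (J \ K).countable_toSet fun _ _ => hV))
    (dependsOn_indicator_pi (dependsOn_configWeight φ a K) _)
    (dependsOn_indicator_pi (dependsOn_configWeight _ a _) _) 0
  rwa [union_sdiff_of_subset hK] at this

theorem configMeasure_lt_top_of_pieces (hφ : ∀ i, Measurable (φ i)) (ha : ∀ i j, a i j = a j i)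
    {σ : ℝ} {U V : Set F} (hU : MeasurableSet U) (hV : MeasurableSet V)
    (hUV : NormSeparated σ U V) {A : Set (J → F)} (hA : A ⊆ cube J (U ∪ V))
    (h : ∀ K ⊆ J, (∃ y ∈ A, ∀ i : J, (i : ℕ) ∈ K ↔ y i ∈ U) →
      configMeasure μ φ a K (cube K U) < ⊤ ∧
        configMeasure μ (twist (fun i => σ * ∑ j ∈ K, a i j) φ) a (J \ K) (cube (J \ K) V) < ⊤) :
    configMeasure μ φ a J A < ⊤ := by
  classical
  let 𝓕 := J.powerset.filter fun K => ∃ y ∈ A, ∀ i : J, (i : ℕ) ∈ K ↔ y i ∈ U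
  have hcover : A ⊆ ⋃ K ∈ 𝓕, Set.univ.pi fun i : J => if (i : ℕ) ∈ K then U else V := by
    intro y hy
    let K := (J.attach.filter fun i => y i ∈ U).map (.subtype _)
    have hK (i : J) : (i : ℕ) ∈ K ↔ y i ∈ U := by simp [K]
    refine Set.mem_biUnion (x := K) ?_ fun i _ => ?_
    · exact mem_filter.2 ⟨mem_powerset.2 (map_subtype_subset _), y, hy, hK⟩
    · by_cases hi : y i ∈ U
      · simp [hK, hi]
      · simpa [hK, hi] using (hA hy i trivial).resolve_left hi
  refine (measure_mono hcover).trans_lt (measure_biUnion_lt_top 𝓕.finite_toSet fun K hK => ?_)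
  obtain ⟨hKJ, hKA⟩ := mem_filter.1 hK
  rw [mem_powerset] at hKJ
  rw [configMeasure_pi_ite μ hφ ha hU hV hUV hKJ]
  exact ENNReal.mul_lt_top (h K hKJ hKA).1 (h K hKJ hKA).2

theorem configMeasure_insert_cube (hφ : ∀ i, Measurable (φ i)) (ha : ∀ i j, a i j = a j i)
    {U : Set F} (hU : MeasurableSet U) {m : ℕ} (hm : m ∉ J) :
    configMeasure μ φ a (insert m J) (cube (insert m J) U) =
      ∫⁻ c in U, φ m c *
        configMeasure μ (fun i z => φ i z * ‖c - z‖ₑ ^ a m i) a J (cube J U) ∂μ := by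
  have hmeas := (measurable_configWeight hφ a (insert m J)).indicator
    (.pi (insert m J).countable_toSet fun _ _ => hU)
  rw [configMeasure_pi μ (fun _ => hU) 0, lmarginal_insert _ hmeas hm, ← lintegral_indicator hU]
  refine lintegral_congr fun c => ?_
  have hψ (i : ℕ) : Measurable fun z => φ i z * ‖c - z‖ₑ ^ a m i := by fun_prop
  have hmeas' := (measurable_configWeight hψ a J).indicator (.pi J.countable_toSet fun _ _ => hU)
  by_cases hc : c ∈ U
  · rw [Set.indicator_of_mem hc, configMeasure_pi μ (fun _ => hU) (update 0 m c), lmarginal,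
      lmarginal, ← lintegral_const_mul _ (by exact hmeas'.comp measurable_updateFinset)]
    refine lintegral_congr fun y => ?_
    generalize hx : updateFinset (update (0 : ℕ → F) m c) J y = x
    have hxm : x m = c := by simp [← hx, updateFinset, hm]
    have hmem : x ∈ ((insert m J : Finset ℕ) : Set ℕ).pi (fun _ => U) ↔
        x ∈ (J : Set ℕ).pi fun _ => U := by
      simp [Set.mem_pi, hxm, hc]
    simp only [Set.indicator, configWeight_insert ha hm, hxm, mul_ite, mul_zero]
    classical exact if_congr hmem rfl rfl
  · rw [Set.indicator_of_notMem hc]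
    refine (lintegral_congr fun y => ?_).trans lintegral_zero
    have hxm : updateFinset (update (0 : ℕ → F) m c) J y m = c := by simp [updateFinset, hm]
    simp [Set.indicator, hxm, hc]

end Configuration

section Degree

/-- The exponent by which the measure with density
`∏ ‖x i‖ ^ e i * ∏_{i < j} ‖x i - x j‖ ^ a i j` on `F ^ L` scales under homotheties. -/
def degree (e : ℕ → ℝ) (a : ℕ → ℕ → ℝ) (L : Finset ℕ) : ℝ :=
  #L + ∑ i ∈ L, e i + ∑ q ∈ pairsIn L, a q.1 q.2

/-- The scaling degree of the points indexed by `L ⊆ J` when they move together, away from the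
other points: `σ = 0` when they approach the origin, where the distances to the other points stay
constant, and `σ = 1` when they escape to infinity, where these distances grow like their norms. -/
def clusterDegree (σ : ℝ) (e : ℕ → ℝ) (a : ℕ → ℕ → ℝ) (J L : Finset ℕ) : ℝ :=
  degree (fun i => e i + σ * ∑ j ∈ J \ L, a i j) a L

theorem clusterDegree_self (σ : ℝ) (e : ℕ → ℝ) (a : ℕ → ℕ → ℝ) (J : Finset ℕ) :
    clusterDegree σ e a J J = degree e a J := by
  simp [clusterDegree]

theorem clusterDegree_sdiff (σ : ℝ) (e : ℕ → ℝ) (a : ℕ → ℕ → ℝ) {J K L : Finset ℕ} (hK : K ⊆ J)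
    (hL : L ⊆ J \ K) :
    clusterDegree σ (fun i => e i + σ * ∑ j ∈ K, a i j) a (J \ K) L = clusterDegree σ e a J L := by
  have hunion : J \ L = K ∪ (J \ K) \ L := by grind
  have hdisj : Disjoint K ((J \ K) \ L) := disjoint_sdiff.mono_right sdiff_subset
  simp only [clusterDegree, hunion, sum_union hdisj, mul_add, add_assoc]

theorem degree_insert {a : ℕ → ℕ → ℝ} (ha : ∀ i j, a i j = a j i) {m : ℕ} {J : Finset ℕ}
    (hm : m ∉ J) (e : ℕ → ℝ) :
    degree e a (insert m J) = 1 + e m + degree (fun i => e i + a m i) a J := by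
  simp only [degree, card_insert_of_notMem hm, sum_insert hm, sum_pairsIn_insert ha hm,
    sum_add_distrib]
  push_cast
  ring

end Degree

section Homogeneous

variable {F : Type*} [NontriviallyNormedField F]

/-- The one-point weights `‖z‖ ^ e i`. -/
abbrev normPow (e : ℕ → ℝ) (i : ℕ) (z : F) : ℝ≥0∞ :=
  ‖z‖ₑ ^ e i

theorem twist_normPow_le (e f : ℕ → ℝ) (i : ℕ) (z : F) :
    twist f (normPow e) i z ≤ normPow (fun i => e i + f i) i z :=
  rpow_mul_rpow_le _ _ _

theorem configWeight_normPow_smul (e : ℕ → ℝ) (a : ℕ → ℕ → ℝ) (J : Finset ℕ) {b : F} (hb : b ≠ 0)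
    (x : ℕ → F) :
    configWeight (normPow e) a J (b • x) =
      ‖b‖ₑ ^ (degree e a J - #J) * configWeight (normPow e) a J x := by
  have hb0 : ‖b‖ₑ ≠ 0 := by simpa using hb
  have hscale (z : F) (r : ℝ) : ‖b * z‖ₑ ^ r = ‖b‖ₑ ^ r * ‖z‖ₑ ^ r := by
    rw [enorm_mul, ENNReal.mul_rpow_of_ne_top enorm_ne_top enorm_ne_top]
  simp only [configWeight, normPow, Pi.smul_apply, smul_eq_mul, ← mul_sub, hscale,
    prod_mul_distrib, prod_rpow_eq_rpow_sum hb0 enorm_ne_top, degree, add_assoc,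
    add_sub_cancel_left, ENNReal.rpow_add _ _ hb0 enorm_ne_top]
  ac_rfl

variable [ProperSpace F] [NormEqModulus F] [MeasurableSpace F] [BorelSpace F] (μ : Measure F)
  [μ.IsAddHaarMeasure] {e : ℕ → ℝ} {a : ℕ → ℕ → ℝ} {J : Finset ℕ} {b : F}

theorem map_smul_configMeasure_normPow (e : ℕ → ℝ) (a : ℕ → ℕ → ℝ) (J : Finset ℕ) (hb : b ≠ 0) :
    (configMeasure μ (normPow e) a J).map (b • ·) =
      ‖b‖ₑ ^ (-degree e a J) • configMeasure μ (normPow e) a J := by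
  let W (y : J → F) : ℝ≥0∞ := configWeight (normPow e) a J (updateFinset 0 J y)
  have hW : Measurable W :=
    (measurable_configWeight (by unfold normPow; fun_prop) a J).comp measurable_updateFinset
  have hb0 : ‖b‖ₑ ≠ 0 := by simpa using hb
  have hWb (y : J → F) : W y = ‖b‖ₑ ^ (#J - degree e a J) * W (b • y) := by
    have hupdate : updateFinset (0 : ℕ → F) J (b • y) = b • updateFinset (0 : ℕ → F) J y := by
      ext i
      by_cases hi : i ∈ J <;> simp [updateFinset, hi]
    simp only [W]
    rw [hupdate, configWeight_normPow_smul e a J hb, ← mul_assoc,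
      ← ENNReal.rpow_add _ _ hb0 enorm_ne_top]
    simp
  ext s hs
  have hsmul : Measurable (b • · : (J → F) → J → F) := measurable_const_smul b
  calc (configMeasure μ (normPow e) a J).map (b • ·) s
      = ∫⁻ y in (b • ·) ⁻¹' s, ‖b‖ₑ ^ (#J - degree e a J) * W (b • y) ∂Measure.pi fun _ => μ := by
        rw [Measure.map_apply hsmul hs, configMeasure, withDensity_apply _ (hsmul hs)]
        exact lintegral_congr hWb
    _ = ‖b‖ₑ ^ (#J - degree e a J) *
          ∫⁻ y in s, W y ∂(Measure.pi fun _ => μ).map (b • ·) := by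
        rw [lintegral_const_mul _ (by exact hW.comp hsmul), setLIntegral_map hs hW hsmul]
    _ = _ := by
        rw [pi_map_const_smul_eq_smul μ J hb, Measure.restrict_smul, lintegral_smul_measure,
          Measure.smul_apply, configMeasure, withDensity_apply _ hs, smul_eq_mul, smul_eq_mul,
          ← mul_assoc, Fintype.card_coe, ← ENNReal.inv_pow, ← ENNReal.rpow_natCast,
          ← ENNReal.rpow_neg, ← ENNReal.rpow_add _ _ hb0 enorm_ne_top, add_comm, neg_add_eq_sub,
          sub_sub_cancel_left]

/-- A domain `U` all of whose configurations are moved by some power of the homothety `b` into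
the shell of those configurations in `U` having a point on the unit sphere. The exponent `σ` says
how the other points see the ones on the sphere. -/
structure IsShellDomain (σ : ℝ) (b : F) (U : Set F) : Prop where
  measurableSet : MeasurableSet U
  ne_zero : b ≠ 0
  normSeparated : NormSeparated σ (sphere 0 1) (U \ sphere 0 1)
  exists_pow_smul_mem (J : Finset ℕ) (y : J → F) (hy0 : y ≠ 0) (hy : y ∈ cube J U) :
    ∃ k : ℕ, b ^ k • y ∈ cube J U ∧ ∃ i, ‖b ^ k * y i‖ = 1

theorem IsShellDomain.configMeasure_normPow_lt_top {σ : ℝ} {U : Set F} (h : IsShellDomain σ b U)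
    (ha : ∀ i j, a i j = a j i)
    (hsphere : ∀ K ⊆ J, configMeasure μ (fun _ _ => 1) a K (cube K (sphere 0 1)) < ⊤)
    (hdeg : ∀ L ⊆ J, L.Nonempty → 1 < ‖b‖ₑ ^ clusterDegree σ e a J L) :
    configMeasure μ (normPow e) a J (cube J U) < ⊤ := by
  induction J using Finset.strongInduction generalizing e with | H J ih =>
  obtain rfl | hJ := J.eq_empty_or_nonempty
  · simp [configMeasure_cube_empty]
  have : Nonempty J := hJ.to_subtype
  have hsph : MeasurableSet (sphere (0 : F) 1) := isClosed_sphere.measurableSet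
  let S : Set (J → F) := cube J U ∩ ⋃ i, eval i ⁻¹' sphere 0 1
  have hS : MeasurableSet S := .inter (.univ_pi fun _ => h.measurableSet)
    (.iUnion fun i => measurable_pi_apply i hsph)
  refine measure_lt_top_of_map_eq_smul (measurable_const_smul b)
    ?_ (map_smul_configMeasure_normPow μ e a J h.ne_zero) hS ?_ ?_
  · rw [ENNReal.rpow_neg, ENNReal.inv_lt_one, ← clusterDegree_self σ]
    exact hdeg J subset_rfl hJ
  · refine configMeasure_lt_top_of_pieces μ (by unfold normPow; fun_prop) ha hsph
      (h.measurableSet.diff hsph) h.normSeparated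
      (fun y hy i _ => (em _).imp_right fun hi => ⟨hy.1 i trivial, hi⟩) ?_
    rintro K hK ⟨y, ⟨-, hy⟩, hyK⟩
    obtain ⟨i, hi⟩ := Set.mem_iUnion.1 hy
    constructor
    · refine (configMeasure_cube_mono μ hsph subset_rfl fun i _ z hz => ?_).trans_lt
        (hsphere K hK)
      have : ‖z‖ₑ = 1 := by simpa [enorm, ← NNReal.coe_inj] using hz
      simp [normPow, this]
    · refine (configMeasure_cube_mono μ (h.measurableSet.diff hsph) Set.sdiff_subset
        fun i _ z _ => twist_normPow_le _ _ i z).trans_lt (ih _ ?_ ?_ ?_)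
      · exact sdiff_ssubset hK ⟨i, (hyK i).2 hi⟩
      · exact fun L hL => hsphere L (hL.trans sdiff_subset)
      · intro L hL hL0
        exact (clusterDegree_sdiff σ e a hK hL).symm ▸ hdeg L (hL.trans sdiff_subset) hL0
  · have h0 : ∀ᵐ y ∂configMeasure μ (normPow e) a J, y ≠ 0 :=
      (withDensity_absolutelyContinuous _ _).ae_le (Measure.ae_ne _ 0)
    filter_upwards [h0] with y hy0 hy
    simpa [S, smul_iterate] using h.exists_pow_smul_mem J y hy0 hy

end Homogeneous

section ShellDomains

variable {F : Type*} [NontriviallyNormedField F] [IsUltrametricDist F]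

theorem normSeparated_sphere_ball : NormSeparated 0 (sphere (0 : F) 1) (ball 0 1) := by
  intro z hz w hw
  rw [mem_ball_zero_iff] at hz
  rw [mem_sphere_zero_iff_norm] at hw
  refine ⟨fun h => (h ▸ hz).ne hw, ?_⟩
  have : ‖w - z‖ = 1 := (norm_sub_eq_left_of_norm_lt (hz.trans_eq hw.symm)).trans hw
  simp [enorm_sub_rev z w, ← ofReal_norm, this]

theorem normSeparated_closedBall_compl :
    NormSeparated 1 (closedBall (0 : F) 1) (closedBall 0 1)ᶜ := by
  intro z hz w hw
  rw [Set.mem_compl_iff, mem_closedBall_zero_iff, not_le] at hz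
  rw [mem_closedBall_zero_iff] at hw
  refine ⟨fun h => hz.not_ge (h ▸ hw), ?_⟩
  simp [← ofReal_norm, norm_sub_eq_left_of_norm_lt (hw.trans_lt hz)]

theorem preimage_sub_left_closedBall {c : F} {r : ℝ} (hc : c ∈ closedBall 0 r) :
    (c - ·) ⁻¹' closedBall 0 r = closedBall 0 r := by
  ext z
  rw [Set.mem_preimage, mem_closedBall_zero_iff, ← dist_eq_norm, ← mem_closedBall',
    ← IsUltrametricDist.closedBall_eq_of_mem hc]

variable [MeasurableSpace F] [BorelSpace F] {ϖ : F}

theorem isShellDomain_closedBall (h0 : ϖ ≠ 0) (h1 : ‖ϖ‖ < 1)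
    (hpow : ∀ z : F, z ≠ 0 → ∃ k : ℤ, ‖z‖ = ‖ϖ‖ ^ k) :
    IsShellDomain 0 ϖ⁻¹ (closedBall 0 1) where
  measurableSet := isClosed_closedBall.measurableSet
  ne_zero := inv_ne_zero h0
  normSeparated := by
    rw [closedBall_sdiff_sphere]
    exact normSeparated_sphere_ball
  exists_pow_smul_mem J y hy0 hy := by
    obtain ⟨i₀, hi₀⟩ := ne_iff.1 hy0
    have : Nonempty J := ⟨i₀⟩
    obtain ⟨i, hi⟩ := Finite.exists_max fun i => ‖y i‖
    have hi0 : 0 < ‖y i‖ := (norm_pos_iff.2 hi₀).trans_le (hi i₀)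
    obtain ⟨k, hk⟩ := hpow (y i) (norm_pos_iff.1 hi0)
    have hk0 : 0 ≤ k := by
      have : ‖ϖ‖ ^ k ≤ ‖ϖ‖ ^ (0 : ℤ) := by simpa [hk] using hy i trivial
      exact (zpow_le_zpow_iff_right_of_lt_one₀ (norm_pos_iff.2 h0) h1).1 this
    lift k to ℕ using hk0
    have hnorm (j) : ‖ϖ⁻¹ ^ k * y j‖ = ‖y j‖ / ‖y i‖ := by
      rw [norm_mul, norm_pow, norm_inv, hk, zpow_natCast, inv_pow, inv_mul_eq_div]
    refine ⟨k, fun j _ => ?_, i, by rw [hnorm, div_self hi0.ne']⟩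
    simpa only [mem_closedBall_zero_iff, Pi.smul_apply, smul_eq_mul, hnorm] using
      (div_le_one hi0).2 (hi j)

theorem isShellDomain_compl_ball (h0 : ϖ ≠ 0) (h1 : ‖ϖ‖ < 1)
    (hpow : ∀ z : F, z ≠ 0 → ∃ k : ℤ, ‖z‖ = ‖ϖ‖ ^ k) :
    IsShellDomain 1 ϖ (ball 0 1)ᶜ where
  measurableSet := isOpen_ball.measurableSet.compl
  ne_zero := h0
  normSeparated := by
    intro z hz w hw
    refine normSeparated_closedBall_compl z (fun hz' => hz.1 ?_) w (sphere_subset_closedBall hw)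
    rw [← closedBall_sdiff_sphere]
    exact ⟨hz', hz.2⟩
  exists_pow_smul_mem J y hy0 hy := by
    have : Nonempty J := ⟨(ne_iff.1 hy0).choose⟩
    have hy' (j : J) : 1 ≤ ‖y j‖ := by simpa using hy j trivial
    obtain ⟨i, hi⟩ := Finite.exists_min fun i => ‖y i‖
    have hi0 : 0 < ‖y i‖ := one_pos.trans_le (hy' i)
    obtain ⟨k, hk⟩ := hpow (y i) (norm_pos_iff.1 hi0)
    have hk0 : k ≤ 0 := by
      have : ‖ϖ‖ ^ (0 : ℤ) ≤ ‖ϖ‖ ^ k := by simpa [hk] using hy' i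
      exact (zpow_le_zpow_iff_right_of_lt_one₀ (norm_pos_iff.2 h0) h1).1 this
    lift -k to ℕ using neg_nonneg.2 hk0 with n hn
    have hnorm (j) : ‖ϖ ^ n * y j‖ = ‖y j‖ / ‖y i‖ := by
      rw [norm_mul, norm_pow, hk, ← zpow_natCast, hn, zpow_neg, inv_mul_eq_div]
    refine ⟨n, fun j _ => ?_, i, by rw [hnorm, div_self hi0.ne']⟩
    simpa only [Set.mem_compl_iff, mem_ball_zero_iff, Pi.smul_apply, smul_eq_mul, hnorm, not_lt]
      using (one_le_div hi0).2 (hi j)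

end ShellDomains

/-- The region of convergence of the Koba–Nielsen integral over `F ^ J`: no cluster of points
diverges when it collapses to a point, to `0`, to `1`, or escapes to infinity, respectively. -/
structure KobaNielsenConvergent (u v : ℕ → ℝ) (a : ℕ → ℕ → ℝ) (J : Finset ℕ) : Prop where
  symm (i j : ℕ) : a i j = a j i
  one_lt_degree {L : Finset ℕ} (hL : L ⊆ J) (hL2 : 2 ≤ #L) : 1 < degree 0 a L
  degree_zero_pos {L : Finset ℕ} (hL : L ⊆ J) (hL0 : L.Nonempty) : 0 < degree u a L
  degree_one_pos {L : Finset ℕ} (hL : L ⊆ J) (hL0 : L.Nonempty) : 0 < degree v a L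
  degree_infty_neg {L : Finset ℕ} (hL : L ⊆ J) (hL0 : L.Nonempty) :
    clusterDegree 1 (u + v) a J L < 0

section Convergence

variable {F : Type*} [NontriviallyNormedField F]

/-- The one-point weights `‖z‖ ^ u i * ‖1 - z‖ ^ v i` of the Koba–Nielsen integrand. -/
def kobaNielsenWeight (u v : ℕ → ℝ) (i : ℕ) (z : F) : ℝ≥0∞ :=
  ‖z‖ₑ ^ u i * ‖1 - z‖ₑ ^ v i

theorem measurable_kobaNielsenWeight [MeasurableSpace F] [BorelSpace F] (u v : ℕ → ℝ) (i : ℕ) :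
    Measurable (kobaNielsenWeight u v i : F → ℝ≥0∞) := by
  unfold kobaNielsenWeight
  fun_prop

variable [ProperSpace F] [IsUltrametricDist F] [NormEqModulus F] [MeasurableSpace F]
  [BorelSpace F] (μ : Measure F) [μ.IsAddHaarMeasure] {e : ℕ → ℝ} {a : ℕ → ℕ → ℝ} {J : Finset ℕ}

theorem configMeasure_normPow_closedBall_lt_top (ha : ∀ i j, a i j = a j i)
    (hsphere : ∀ K ⊆ J, configMeasure μ (fun _ _ => 1) a K (cube K (sphere 0 1)) < ⊤)
    (hdeg : ∀ L ⊆ J, L.Nonempty → 0 < degree e a L) :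
    configMeasure μ (normPow e) a J (cube J (closedBall 0 1)) < ⊤ := by
  obtain ⟨ϖ, h0, h1, hpow⟩ := exists_norm_eq_zpow F
  refine (isShellDomain_closedBall h0 h1 hpow).configMeasure_normPow_lt_top μ ha hsphere
    fun L hL hL0 => ENNReal.one_lt_rpow ?_ (by simpa [clusterDegree] using hdeg L hL hL0)
  rw [enorm_inv h0, ENNReal.one_lt_inv, ← ofReal_norm]
  exact ENNReal.ofReal_lt_one.2 h1

theorem configMeasure_normPow_compl_ball_lt_top (ha : ∀ i j, a i j = a j i)
    (hsphere : ∀ K ⊆ J, configMeasure μ (fun _ _ => 1) a K (cube K (sphere 0 1)) < ⊤)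
    (hdeg : ∀ L ⊆ J, L.Nonempty → clusterDegree 1 e a J L < 0) :
    configMeasure μ (normPow e) a J (cube J (ball 0 1)ᶜ) < ⊤ := by
  obtain ⟨ϖ, h0, h1, hpow⟩ := exists_norm_eq_zpow F
  refine (isShellDomain_compl_ball h0 h1 hpow).configMeasure_normPow_lt_top μ ha hsphere
    fun L hL hL0 => ENNReal.one_lt_rpow_of_pos_of_lt_one_of_neg ?_ ?_ (hdeg L hL hL0)
  · simpa using h0
  · rw [← ofReal_norm]
    exact ENNReal.ofReal_lt_one.2 h1

theorem configMeasure_one_closedBall_lt_top (ha : ∀ i j, a i j = a j i)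
    (hdeg : ∀ L ⊆ J, 2 ≤ #L → 1 < degree 0 a L) :
    configMeasure μ (fun _ _ => 1) a J (cube J (closedBall 0 1)) < ⊤ := by
  induction J using Finset.strongInduction with | H J ih =>
  obtain rfl | ⟨m, hm⟩ := J.eq_empty_or_nonempty
  · simp [configMeasure_cube_empty]
  obtain ⟨J, hmJ, rfl⟩ : ∃ J', m ∉ J' ∧ insert m J' = J :=
    ⟨J.erase m, notMem_erase m J, insert_erase hm⟩
  have hsub (c : F) (hc : c ∈ closedBall 0 1) :
      configMeasure μ (fun i z => 1 * ‖c - z‖ₑ ^ a m i) a J (cube J (closedBall 0 1)) =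
        configMeasure μ (normPow (a m)) a J (cube J (closedBall 0 1)) := by
    have := configMeasure_sub_left (φ := normPow (a m)) (a := a) (J := J) μ
      (isClosed_closedBall (x := 0) (ε := 1)).measurableSet c
    simpa only [preimage_sub_left_closedBall hc, one_mul] using this
  have hfin : configMeasure μ (normPow (a m)) a J (cube J (closedBall 0 1)) < ⊤ := by
    refine configMeasure_normPow_closedBall_lt_top μ ha (fun K hK => ?_) fun L hL hL0 => ?_
    · refine (configMeasure_cube_mono μ isClosed_sphere.measurableSet sphere_subset_closedBall
        fun _ _ _ _ => le_rfl).trans_lt (ih K (hK.trans_ssubset (ssubset_insert hmJ))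
          fun L hL => hdeg L ((hL.trans hK).trans (subset_insert m J)))
    · have hmL : m ∉ L := fun h => hmJ (hL h)
      have := hdeg (insert m L) (insert_subset_insert m hL) (by
        rw [card_insert_of_notMem hmL]; exact Nat.succ_le_succ hL0.card_pos)
      simpa [degree_insert ha hmL] using this
  calc _ = ∫⁻ _ in closedBall 0 1,
          configMeasure μ (normPow (a m)) a J (cube J (closedBall 0 1)) ∂μ := by
        rw [configMeasure_insert_cube μ (fun _ => measurable_const) ha
          isClosed_closedBall.measurableSet hmJ]
        refine setLIntegral_congr_fun isClosed_closedBall.measurableSet fun c hc => ?_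
        rw [one_mul, ← hsub c hc]
    _ < ⊤ := by
        rw [setLIntegral_const]
        exact ENNReal.mul_lt_top hfin (isCompact_closedBall 0 1).measure_lt_top

namespace KobaNielsenConvergent

variable {u v : ℕ → ℝ} (h : KobaNielsenConvergent u v a J)
include h

theorem configMeasure_sphere_lt_top {K : Finset ℕ} (hK : K ⊆ J) :
    configMeasure μ (fun _ _ => 1) a K (cube K (sphere 0 1)) < ⊤ :=
  (configMeasure_cube_mono μ isClosed_sphere.measurableSet sphere_subset_closedBall
    fun _ _ _ _ => le_rfl).trans_lt
      (configMeasure_one_closedBall_lt_top μ h.symm fun _ hL => h.one_lt_degree (hL.trans hK))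

theorem configMeasure_closedBall_lt_top {K : Finset ℕ} (hK : K ⊆ J) :
    configMeasure μ (kobaNielsenWeight u v) a K (cube K (closedBall 0 1)) < ⊤ := by
  have hS : MeasurableSet (sphere (0 : F) 1) := isClosed_sphere.measurableSet
  have hB : MeasurableSet (ball (0 : F) 1) := isOpen_ball.measurableSet
  refine configMeasure_lt_top_of_pieces μ (measurable_kobaNielsenWeight u v) h.symm hS hB
    normSeparated_sphere_ball (Set.pi_mono fun _ _ => sphere_union_ball.ge) fun M hM _ => ⟨?_, ?_⟩
  · have hone : (1 : F) ∈ closedBall 0 1 := by simp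
    have hM1 :
        configMeasure μ (fun i z => normPow v i (1 - z)) a M (cube M (closedBall 0 1)) < ⊤ := by
      rw [← preimage_sub_left_closedBall hone,
        configMeasure_sub_left μ isClosed_closedBall.measurableSet]
      exact configMeasure_normPow_closedBall_lt_top μ h.symm
        (fun L hL => h.configMeasure_sphere_lt_top μ (hL.trans (hM.trans hK)))
        fun L hL => h.degree_one_pos (hL.trans (hM.trans hK))
    refine (configMeasure_cube_mono μ hS sphere_subset_closedBall fun i _ z hz => ?_).trans_lt hM1
    have : ‖z‖ₑ = 1 := by simpa [enorm, ← NNReal.coe_inj] using hz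
    simp [kobaNielsenWeight, this]
  · have hsub : K \ M ⊆ J := sdiff_subset.trans hK
    refine (configMeasure_cube_mono μ hB ball_subset_closedBall fun i _ z hz => ?_).trans_lt
      (configMeasure_normPow_closedBall_lt_top (e := u) μ h.symm
        (fun L hL => h.configMeasure_sphere_lt_top μ (hL.trans hsub))
        fun L hL => h.degree_zero_pos (hL.trans hsub))
    have : ‖1 - z‖ₑ = 1 := by
      simpa [enorm_sub_rev] using (normSeparated_sphere_ball z hz 1 (by simp)).2
    simp [twist, kobaNielsenWeight, this]

theorem configMeasure_univ_lt_top :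
    configMeasure μ (kobaNielsenWeight u v) a J Set.univ < ⊤ := by
  have hB : MeasurableSet (closedBall (0 : F) 1) := isClosed_closedBall.measurableSet
  refine configMeasure_lt_top_of_pieces μ (measurable_kobaNielsenWeight u v) h.symm hB hB.compl
    normSeparated_closedBall_compl (by simp) fun K hK _ =>
      ⟨h.configMeasure_closedBall_lt_top μ hK, ?_⟩
  let e (i : ℕ) : ℝ := (u + v) i + 1 * ∑ j ∈ K, a i j
  refine (configMeasure_cube_mono μ hB.compl (Set.compl_subset_compl.2 ball_subset_closedBall)
    fun i _ z hz => ?_).trans_lt (configMeasure_normPow_compl_ball_lt_top (e := e) μ h.symm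
      (fun L hL => h.configMeasure_sphere_lt_top μ (hL.trans sdiff_subset)) fun L hL hL0 => ?_)
  · have : ‖1 - z‖ₑ = ‖z‖ₑ := by
      simpa [enorm_sub_rev] using (normSeparated_closedBall_compl z hz 1 (by simp)).2
    calc twist (fun i => 1 * ∑ j ∈ K, a i j) (kobaNielsenWeight u v) i z
        = ‖z‖ₑ ^ u i * ‖z‖ₑ ^ v i * ‖z‖ₑ ^ (1 * ∑ j ∈ K, a i j) := by
          rw [twist, kobaNielsenWeight, this]
      _ ≤ ‖z‖ₑ ^ (u i + v i) * ‖z‖ₑ ^ (1 * ∑ j ∈ K, a i j) :=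
          mul_le_mul_left (rpow_mul_rpow_le _ _ _) _
      _ ≤ normPow e i z := rpow_mul_rpow_le _ _ _
  · rw [clusterDegree_sdiff 1 (u + v) a hK hL]
    exact h.degree_infty_neg (hL.trans sdiff_subset) hL0

end KobaNielsenConvergent

end Convergence

section Integral

variable {F : Type*} [NontriviallyNormedField F]

theorem enorm_ofReal_norm_cpow_le (z : F) (w : ℂ) : ‖(‖z‖ : ℂ) ^ w‖ₑ ≤ ‖z‖ₑ ^ w.re := by
  obtain rfl | hz := eq_or_ne z 0
  · rcases lt_trichotomy w.re 0 with hw | hw | hw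
    · simp [hw]
    · obtain rfl | hw0 := eq_or_ne w 0 <;> simp [*]
    · have : w ≠ 0 := by rintro rfl; simp at hw
      simp [this]
  · rw [← ofReal_norm, ← ofReal_norm, Complex.norm_cpow_eq_rpow_re_of_pos (norm_pos_iff.2 hz),
      ENNReal.ofReal_rpow_of_pos (norm_pos_iff.2 hz)]

/-- The Koba–Nielsen integrand over `F ^ J`, with exponents `u i` at `0`, `v i` at `1` and `a i j`
between two points. At `F = ℚ_[p]`, `J = T`, `u = s 1`, `v = s (N - 1)` and `a = s` it is
`ZNintegrand p N s`, by definition. -/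
def kobaNielsenIntegrand (u v : ℕ → ℂ) (a : ℕ → ℕ → ℂ) (J : Finset ℕ) (y : J → F) : ℂ :=
  let x : ℕ → F := updateFinset 0 J y
  (∏ i ∈ J, (‖x i‖ : ℂ) ^ u i * (‖1 - x i‖ : ℂ) ^ v i) *
    ∏ q ∈ pairsIn J, (‖x q.1 - x q.2‖ : ℂ) ^ a q.1 q.2

theorem enorm_kobaNielsenIntegrand_le (u v : ℕ → ℂ) (a : ℕ → ℕ → ℂ) {J : Finset ℕ} (y : J → F) :
    ‖kobaNielsenIntegrand u v a J y‖ₑ ≤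
      configWeight (kobaNielsenWeight (fun i => (u i).re) fun i => (v i).re)
        (fun i j => (a i j).re) J (updateFinset 0 J y) := by
  simp only [kobaNielsenIntegrand, configWeight, kobaNielsenWeight, enorm_eq_nnnorm, nnnorm_prod,
    ENNReal.ofNNReal_finsetProd, nnnorm_mul, ENNReal.coe_mul]
  gcongr <;> exact enorm_ofReal_norm_cpow_le _ _

variable [MeasurableSpace F] [BorelSpace F]

theorem measurable_kobaNielsenIntegrand [SecondCountableTopology F] (u v : ℕ → ℂ)
    (a : ℕ → ℕ → ℂ) (J : Finset ℕ) :
    Measurable (kobaNielsenIntegrand u v a J : (J → F) → ℂ) := by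
  unfold kobaNielsenIntegrand
  have (i : ℕ) : Measurable fun y : J → F => updateFinset (0 : ℕ → F) J y i :=
    measurable_pi_iff.1 (measurable_updateFinset (X := fun _ => F)) i
  fun_prop

variable [ProperSpace F] [IsUltrametricDist F] [NormEqModulus F] (μ : Measure F)
  [μ.IsAddHaarMeasure] {u v : ℕ → ℂ} {a : ℕ → ℕ → ℂ} {J : Finset ℕ}

theorem integrable_kobaNielsenIntegrand
    (h : KobaNielsenConvergent (fun i => (u i).re) (fun i => (v i).re) (fun i j => (a i j).re) J) :
    Integrable (kobaNielsenIntegrand u v a J) (Measure.pi fun _ : J => μ) := by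
  refine ⟨(measurable_kobaNielsenIntegrand u v a J).aestronglyMeasurable, ?_⟩
  refine (lintegral_mono (enorm_kobaNielsenIntegrand_le u v a)).trans_lt ?_
  simpa [configMeasure] using h.configMeasure_univ_lt_top μ

theorem ZN_ball_limit_general
    (h : KobaNielsenConvergent (fun i => (u i).re) (fun i => (v i).re) (fun i j => (a i j).re) J)
    (D : Set (J → F)) {ι : Type*} {l : Filter ι} [l.IsCountablyGenerated] {R : ι → ℝ}
    (hR : Filter.Tendsto R l Filter.atTop) :
    Filter.Tendsto
      (fun r => ∫ y in D ∩ {y | ∀ i, ‖y i‖ ≤ R r}, kobaNielsenIntegrand u v a J y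
        ∂Measure.pi fun _ => μ) l
      (nhds (∫ y in D, kobaNielsenIntegrand u v a J y ∂Measure.pi fun _ => μ)) := by
  have hmeas (r : ι) : MeasurableSet {y : J → F | ∀ i, ‖y i‖ ≤ R r} := by measurability
  have hcover : AECover ((Measure.pi fun _ => μ).restrict D) l
      fun r => {y : J → F | ∀ i, ‖y i‖ ≤ R r} :=
    (aecover_closedBall (x := 0) hR).superset
      (fun r y hy i => (norm_le_pi_norm y i).trans (mem_closedBall_zero_iff.1 hy)) hmeas
  simpa only [Measure.restrict_restrict (hmeas _), Set.inter_comm] using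
    hcover.integral_tendsto_of_countably_generated
      (integrable_kobaNielsenIntegrand μ h).restrict

end Integral

theorem kobaNielsenConvergent_of_H0C {N : ℕ} {s : ℕ → ℕ → ℂ} (hsym : ∀ i j, s i j = s j i)
    (hs : H0C N s) :
    KobaNielsenConvergent (fun i => (s 1 i).re) (fun i => (s (N - 1) i).re)
      (fun i j => (s i j).re) (Tset N) where
  symm i j := by rw [hsym]
  one_lt_degree hL hL2 := by
    have := hs.2.1 _ hL hL2
    simp only [degree, Pi.zero_apply, sum_const_zero, add_zero]
    linarith
  degree_zero_pos hL hL0 := hs.2.2.1 1 (by simp) _ hL _ subset_rfl (.inr hL0.card_pos)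
  degree_one_pos hL hL0 := hs.2.2.1 (N - 1) (by simp) _ hL _ subset_rfl (.inr hL0.card_pos)
  degree_infty_neg {L} hL hL0 := by
    have hpairs := sum_pairsIn_filter_touching (g := fun i j => (s i j).re)
      (fun i j => by rw [hsym]) hL
    have := hs.1 L hL hL0
    simp only [clusterDegree, degree, Pi.add_apply, one_mul, sum_add_distrib] at this ⊢
    linarith

/-- For `s ∈ H₀(ℂ)`, the truncated integrals over the balls `B_r^{N-3}` converge, as
`r → ∞`, to the `p`-adic open string `N`-point zeta function `Z^{(N)}(s)`. -/
theorem ZN_ball_limit (p : ℕ) [Fact p.Prime] (N : ℕ) (hN : 4 ≤ N)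
    (s : ℕ → ℕ → ℂ) (hsym : ∀ i j, s i j = s j i) (hs : H0C N s) :
    Filter.Tendsto
      (fun r : ℕ =>
        ∫ x in ZNset p N ∩ {x | ∀ i, ‖x i‖ ≤ (p : ℝ) ^ r},
          ZNintegrand p N s x ∂(padicPi p ↥(Tset N)))
      Filter.atTop
      (nhds (∫ x in ZNset p N, ZNintegrand p N s x ∂(padicPi p ↥(Tset N)))) :=
  ZN_ball_limit_general (padicHaar p) (kobaNielsenConvergent_of_H0C hsym hs) (ZNset p N)
    (tendsto_pow_atTop_atTop_of_one_lt (Nat.one_lt_cast.2 (Fact.out : p.Prime).one_lt))
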